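/- arXiv:0812.0672 — 5 statements merged into one kernel-verified Lean document; each statement's English description precedes it below -/
import Mathlib

section
/- If a normed real vector space V is roughly isometric to a Ptolemy metric space, then V is an inner product space, i.e. its norm satisfies the parallelogram law ‖x+y‖² + ‖x−y‖² = 2‖x‖² + 2‖y‖² for all x,y ∈ V. -/
/-!
Rescaling turns a rough isometry into an isometry: applying the Ptolemy inequality to the images
of `s • p` for `s → ∞` and dividing by `s²` shows that `V` itself is Ptolemy (`ptolemy_limit`).
For the four points `p, -p, q, -q` this gives Day's inequality

  `4 ‖p‖ ‖q‖ ≤ ‖p + q‖² + ‖p - q‖²`,                                             (D)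

and it remains to see that (D) forces the parallelogram law on any two independent vectors.

Let `x` be a unit vector, `ψ` a norming functional at `x`, and `v` a unit vector in `ker ψ`. Put
`f t = ‖x + t v‖`, so that `f ≥ 1 = f 0`. Among the forms `Q (a x + b v) = a² + l b²` take the
one with the least `l ≥ 1` such that `‖·‖² ≤ Q`; thus `l` is the supremum of `1` and of all
`(f t² - 1) / t²`. By (D) the limsup of this quotient at `0` is at most `1`
(`quotient_near_zero`), and at infinity the same holds by the triangle inequality, so either
`l = 1` or the supremum is attained at some `t ≠ 0` (`exists_touching_form`). In both cases
`‖·‖²` and `Q` agree at `x` and at a second vector independent of `x`.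

If `Q p = Q q` and `‖·‖² = Q` at `p` and `q`, then (D) and the parallelogram law for `Q` force
`‖·‖² = Q` at `p + q` and `p - q`: the set of directions of contact is closed under both angle
bisectors. Being also topologically closed, it is everything (`contact_everywhere`), so `‖·‖² = Q`
on the plane spanned by `x` and `v`.
-/

/-- A metric space is Ptolemy if `|xy|·|uv| ≤ |xu|·|yv| + |xv|·|yu|` for all points. -/
def IsPtolemy (X : Type*) [MetricSpace X] : Prop :=
  ∀ x y u v : X, dist x y * dist u v ≤ dist x u * dist y v + dist x v * dist y u

open Filter Topology in
/-- The Ptolemy inequality passes from `X` to `V` by rescaling. -/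
lemma ptolemy_limit {V : Type*} [NormedAddCommGroup V] [NormedSpace ℝ V]
    {X : Type*} [MetricSpace X] (hpt : IsPtolemy X)
    (φ : V → X) (A : ℝ)
    (hrough : ∀ v v' : V,
      dist v v' - A ≤ dist (φ v) (φ v') ∧ dist (φ v) (φ v') ≤ dist v v' + A) :
    IsPtolemy V := by
  intro x y u v
  rcases (dist_nonneg (x := x) (y := y)).eq_or_lt with h1 | h1
  · rw [← h1, zero_mul]; positivity
  rcases (dist_nonneg (x := u) (y := v)).eq_or_lt with h2 | h2
  · rw [← h2, mul_zero]; positivity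
  have hlim : Tendsto (fun s : ℝ => A / s) atTop (𝓝 0) := tendsto_const_nhds.div_atTop tendsto_id
  have hl : Tendsto (fun s : ℝ => (dist x y - A / s) * (dist u v - A / s)) atTop
      (𝓝 ((dist x y - 0) * (dist u v - 0))) :=
    (tendsto_const_nhds.sub hlim).mul (tendsto_const_nhds.sub hlim)
  have hr : Tendsto (fun s : ℝ => (dist x u + A / s) * (dist y v + A / s)
      + (dist x v + A / s) * (dist y u + A / s)) atTop
      (𝓝 ((dist x u + 0) * (dist y v + 0) + (dist x v + 0) * (dist y u + 0))) :=
    ((tendsto_const_nhds.add hlim).mul (tendsto_const_nhds.add hlim)).add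
      ((tendsto_const_nhds.add hlim).mul (tendsto_const_nhds.add hlim))
  have key := le_of_tendsto_of_tendsto hl hr (by
    filter_upwards [eventually_gt_atTop 0, hlim.eventually_lt_const h1,
      hlim.eventually_lt_const h2] with s hs e1 e2
    have scale : ∀ p q : V, dist p q - A / s ≤ dist (φ (s • p)) (φ (s • q)) / s ∧
        dist (φ (s • p)) (φ (s • q)) / s ≤ dist p q + A / s := by
      intro p q
      have h := hrough (s • p) (s • q)
      rw [dist_smul₀, Real.norm_of_nonneg hs.le] at h
      constructor
      · rw [le_div_iff₀ hs, sub_mul, div_mul_cancel₀ _ hs.ne']; linarith [h.1]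
      · rw [div_le_iff₀ hs, add_mul, div_mul_cancel₀ _ hs.ne']; linarith [h.2]
    have hX := hpt (φ (s • x)) (φ (s • y)) (φ (s • u)) (φ (s • v))
    calc (dist x y - A / s) * (dist u v - A / s)
        ≤ (dist (φ (s • x)) (φ (s • y)) / s) * (dist (φ (s • u)) (φ (s • v)) / s) :=
          mul_le_mul (scale x y).1 (scale u v).1 (by linarith) (by positivity)
      _ = (dist (φ (s • x)) (φ (s • y)) * dist (φ (s • u)) (φ (s • v))) / (s * s) := by
          rw [div_mul_div_comm]
      _ ≤ (dist (φ (s • x)) (φ (s • u)) * dist (φ (s • y)) (φ (s • v))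
          + dist (φ (s • x)) (φ (s • v)) * dist (φ (s • y)) (φ (s • u))) / (s * s) := by
          gcongr
      _ = (dist (φ (s • x)) (φ (s • u)) / s) * (dist (φ (s • y)) (φ (s • v)) / s)
          + (dist (φ (s • x)) (φ (s • v)) / s) * (dist (φ (s • y)) (φ (s • u)) / s) := by
          rw [div_mul_div_comm, div_mul_div_comm, add_div]
      _ ≤ _ := by
          have a1 := (scale x u).2
          have a2 := (scale y v).2
          have a3 := (scale x v).2
          have a4 := (scale y u).2
          have b1 : 0 ≤ dist (φ (s • x)) (φ (s • u)) / s := by positivity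
          have b2 : 0 ≤ dist (φ (s • x)) (φ (s • v)) / s := by positivity
          exact add_le_add
            (mul_le_mul a1 a2 (by positivity) (b1.trans a1))
            (mul_le_mul a3 a4 (by positivity) (b2.trans a3)))
  simpa using key

/-- Day's inequality: Ptolemy for the points `p, -p, q, -q`. -/
lemma day_inequality {V : Type*} [NormedAddCommGroup V] [NormedSpace ℝ V] (h : IsPtolemy V)
    (p q : V) : 4 * ‖p‖ * ‖q‖ ≤ ‖p + q‖ ^ 2 + ‖p - q‖ ^ 2 := by
  have h0 := h p (-p) q (-q)
  have e1 : ‖p - -p‖ = 2 * ‖p‖ := by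
    rw [sub_neg_eq_add, ← two_smul ℝ p, norm_smul]; norm_num
  have e2 : ‖q - -q‖ = 2 * ‖q‖ := by
    rw [sub_neg_eq_add, ← two_smul ℝ q, norm_smul]; norm_num
  have e3 : ‖-p - -q‖ = ‖p - q‖ := by rw [← norm_neg]; congr 1; abel
  have e4 : ‖-p - q‖ = ‖p + q‖ := by rw [← norm_neg]; congr 1; abel
  have e5 : ‖p - -q‖ = ‖p + q‖ := by rw [sub_neg_eq_add]
  simp only [dist_eq_norm, e1, e2, e3, e4, e5] at h0
  nlinarith

/-- A closed set of angles that is stable under midpoints of nearby angles contains, with the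
endpoints of a quarter turn, every angle in between. -/
lemma contact_quarter (g : ℝ → ℝ) (hc : Continuous g)
    (hmid : ∀ s t, g s = 1 → g t = 1 → Real.cos ((s - t) / 2) ≠ 0 → g ((s + t) / 2) = 1)
    (t₀ : ℝ) (h0 : g t₀ = 1) (h1 : g (t₀ + Real.pi / 2) = 1)
    (t : ℝ) (ht0 : t₀ ≤ t) (ht1 : t ≤ t₀ + Real.pi / 2) : g t = 1 := by
  have hclosed : IsClosed {r | g r = 1} := isClosed_eq hc continuous_const
  -- `a` and `b` are the ends of the gap around `t` in the contact set.
  set S : Set ℝ := {r | g r = 1} ∩ Set.Icc t₀ t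
  set S' : Set ℝ := {r | g r = 1} ∩ Set.Icc t (t₀ + Real.pi / 2)
  have haS : sSup S ∈ S := (hclosed.inter isClosed_Icc).csSup_mem ⟨t₀, h0, le_rfl, ht0⟩
    ⟨t, fun r hr => hr.2.2⟩
  have hbS : sInf S' ∈ S' := (hclosed.inter isClosed_Icc).csInf_mem ⟨_, h1, ht1, le_rfl⟩
    ⟨t, fun r hr => hr.2.1⟩
  have hamax : ∀ r ∈ S, r ≤ sSup S := fun r hr => le_csSup ⟨t, fun r hr => hr.2.2⟩ hr
  have hbmin : ∀ r ∈ S', sInf S' ≤ r := fun r hr => csInf_le ⟨t, fun r hr => hr.2.1⟩ hr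
  generalize sSup S = a at *
  generalize sInf S' = b at *
  obtain ⟨ha, ha0, hat⟩ := haS
  obtain ⟨hb, hbt, hb1⟩ := hbS
  have hpi := Real.pi_pos
  have hcos : Real.cos ((a - b) / 2) ≠ 0 :=
    (Real.cos_pos_of_mem_Ioo ⟨by linarith, by linarith⟩).ne'
  have hm := hmid a b ha hb hcos
  rcases le_total ((a + b) / 2) t with h | h
  · have := hamax _ ⟨hm, by linarith, h⟩
    have : t = b := by linarith
    rw [this]; exact hb
  · have := hbmin _ ⟨hm, h, by linarith⟩
    have : t = a := by linarith
    rw [this]; exact ha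

/-- Here `g t` stands for the squared norm of the `Q`-unit vector at angle `t`. Contact at two
independent directions spreads to all directions. -/
lemma contact_everywhere (g : ℝ → ℝ) (hc : Continuous g) (hle : ∀ t, g t ≤ 1)
    (hper : Function.Periodic g Real.pi)
    (hD : ∀ s t, g s = 1 → g t = 1 →
      1 ≤ Real.cos ((s - t) / 2) ^ 2 * g ((s + t) / 2)
        + Real.sin ((s - t) / 2) ^ 2 * g ((s + t) / 2 + Real.pi / 2))
    (θ : ℝ) (h0 : g 0 = 1) (hθ : g θ = 1) (hs : Real.sin θ ≠ 0) (t : ℝ) : g t = 1 := by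
  have hmid : ∀ s t, g s = 1 → g t = 1 → Real.cos ((s - t) / 2) ≠ 0 → g ((s + t) / 2) = 1 := by
    intro s t hs ht hcs
    refine le_antisymm (hle _) ?_
    by_contra! hlt
    have h1 := hD s t hs ht
    have h2 := Real.sin_sq_add_cos_sq ((s - t) / 2)
    have h3 : 0 < Real.cos ((s - t) / 2) ^ 2 := by positivity
    nlinarith [mul_pos h3 (sub_pos.2 hlt),
      mul_nonneg (sq_nonneg (Real.sin ((s - t) / 2)))
        (sub_nonneg.2 (hle ((s + t) / 2 + Real.pi / 2)))]
  have hmid' : ∀ s t, g s = 1 → g t = 1 → Real.sin ((s - t) / 2) ≠ 0 →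
      g ((s + t) / 2 + Real.pi / 2) = 1 := by
    intro s t hs ht hsn
    refine le_antisymm (hle _) ?_
    by_contra! hlt
    have h1 := hD s t hs ht
    have h2 := Real.sin_sq_add_cos_sq ((s - t) / 2)
    have h3 : 0 < Real.sin ((s - t) / 2) ^ 2 := by positivity
    nlinarith [mul_pos h3 (sub_pos.2 hlt),
      mul_nonneg (sq_nonneg (Real.cos ((s - t) / 2))) (sub_nonneg.2 (hle ((s + t) / 2)))]
  have hdouble : Real.sin θ = 2 * Real.sin (θ / 2) * Real.cos (θ / 2) := by
    rw [← Real.sin_two_mul]; congr 1; ring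
  have hsin : Real.sin ((θ - 0) / 2) ≠ 0 := by
    rw [sub_zero]; intro h; apply hs; rw [hdouble, h]; ring
  have hcos : Real.cos ((θ - 0) / 2) ≠ 0 := by
    rw [sub_zero]; intro h; apply hs; rw [hdouble, h]; ring
  have a0 := hmid θ 0 hθ h0 hcos
  have a1 := hmid' θ 0 hθ h0 hsin
  rw [add_zero] at a0 a1
  have a2 : g (θ / 2 + Real.pi / 2 + Real.pi / 2) = 1 := by
    rw [show θ / 2 + Real.pi / 2 + Real.pi / 2 = θ / 2 + Real.pi by ring, hper, a0]
  obtain ⟨r, hr, hrt⟩ := hper.exists_mem_Ico Real.pi_pos t (θ / 2)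
  rw [hrt]
  rcases le_total r (θ / 2 + Real.pi / 2) with h | h
  · exact contact_quarter g hc hmid _ a0 a1 r hr.1 h
  · exact contact_quarter g hc hmid _ a1 a2 r h (by linarith [hr.2])

/-- The halving inequality `f t ≤ f (t / 2)² + t² / 4` bounds the second-order growth of `f` at its
minimum: with `G` the supremum of `(f t² - 1) / t²` over `0 < |t| ≤ d`, it yields
`G ≤ (G + 1) / 2 + d²`. -/
lemma quotient_near_zero (f : ℝ → ℝ) (h1 : ∀ t, 1 ≤ f t)
    (hhalf : ∀ t, f t ≤ f (t / 2) ^ 2 + t ^ 2 / 4)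
    (hsym : ∀ t, f t * f (-t) ≤ 1 + t ^ 2)
    (d : ℝ) (hd0 : 0 < d) (hd1 : d ≤ 1) (t : ℝ) (ht0 : t ≠ 0) (htd : |t| ≤ d) :
    (f t ^ 2 - 1) / t ^ 2 ≤ 1 + 2 * d ^ 2 := by
  set P : Set ℝ := {r | r ≠ 0 ∧ |r| ≤ d} with hP
  set g : ℝ → ℝ := fun r => (f r ^ 2 - 1) / r ^ 2 with hg
  have hsq : ∀ r ∈ P, 0 < r ^ 2 ∧ r ^ 2 ≤ d ^ 2 := fun r hr =>
    ⟨by have := hr.1; positivity, by rw [← sq_abs r]; gcongr; exact hr.2⟩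
  have hgf : ∀ r ∈ P, f r ^ 2 = 1 + g r * r ^ 2 := by
    intro r hr
    have := hr.1
    simp only [hg]; field_simp; ring
  have hd2 : d ^ 2 ≤ 1 := by nlinarith
  have hb : ∀ r ∈ P, g r ≤ 3 := by
    intro r hr
    obtain ⟨hp, hq⟩ := hsq r hr
    have hf : f r ≤ 1 + r ^ 2 := by nlinarith [hsym r, h1 r, h1 (-r)]
    rw [hg]; simp only
    rw [div_le_iff₀ hp]
    nlinarith [h1 r, mul_nonneg hp.le (sub_nonneg.2 (hq.trans hd2))]
  have hg0 : ∀ r ∈ P, 0 ≤ g r := by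
    intro r hr
    have := h1 r
    exact div_nonneg (by nlinarith) (sq_nonneg r)
  have hbdd : BddAbove (g '' P) := ⟨3, by rintro _ ⟨r, hr, rfl⟩; exact hb r hr⟩
  have htP : t ∈ P := ⟨ht0, htd⟩
  have hstep : ∀ r ∈ P, g r ≤ (sSup (g '' P) + 1) / 2 + d ^ 2 := by
    intro r hr
    have hr2 : r / 2 ∈ P := by
      refine ⟨by have := hr.1; positivity, ?_⟩
      rw [abs_div, abs_two]; linarith [hr.2, abs_nonneg r]
    have hS : g (r / 2) ≤ sSup (g '' P) := le_csSup hbdd ⟨_, hr2, rfl⟩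
    obtain ⟨hp, hq⟩ := hsq r hr
    have e := hhalf r
    rw [hgf _ hr2] at e
    have e1 := hgf r hr
    have k0 := hg0 _ hr2
    have k3 := hb _ hr2
    generalize g (r / 2) = k at *
    have e2 : f r ≤ 1 + (k + 1) / 4 * r ^ 2 := by linarith
    have e3 : f r ^ 2 ≤ (1 + (k + 1) / 4 * r ^ 2) ^ 2 := by
      have := h1 r; gcongr
    have e4 : g r * r ^ 2 ≤ ((k + 1) / 2 + ((k + 1) / 4) ^ 2 * r ^ 2) * r ^ 2 := by
      linear_combination e3 - e1
    have e5 := le_of_mul_le_mul_right e4 hp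
    have e6 : ((k + 1) / 4) ^ 2 ≤ 1 := by nlinarith
    nlinarith
  have hle : sSup (g '' P) ≤ (sSup (g '' P) + 1) / 2 + d ^ 2 :=
    csSup_le ⟨_, t, htP, rfl⟩ (by rintro _ ⟨r, hr, rfl⟩; exact hstep r hr)
  have := le_csSup hbdd (⟨t, htP, rfl⟩ : g t ∈ g '' P)
  show g t ≤ _
  linarith

/-- Some majorant `1 + l t²` of `f t²` with `l ≥ 1` either has `l = 1` or touches `f t²` at some
`t ≠ 0`. The quotient `(f t² - 1) / t²` has limsup at most `1` at `0` and at infinity, so if it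
exceeds `1` anywhere then it attains its maximum, which is the `l` sought. -/
lemma exists_touching_form (f : ℝ → ℝ) (hc : Continuous f) (h1 : ∀ t, 1 ≤ f t)
    (hup : ∀ t, f t ≤ 1 + |t|)
    (hhalf : ∀ t, f t ≤ f (t / 2) ^ 2 + t ^ 2 / 4)
    (hsym : ∀ t, f t * f (-t) ≤ 1 + t ^ 2) :
    ∃ l : ℝ, 1 ≤ l ∧ (∀ t, f t ^ 2 ≤ 1 + l * t ^ 2) ∧
      (l = 1 ∨ ∃ t, t ≠ 0 ∧ f t ^ 2 = 1 + l * t ^ 2) := by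
  by_cases hall : ∀ t, f t ^ 2 ≤ 1 + 1 * t ^ 2
  · exact ⟨1, le_rfl, hall, Or.inl rfl⟩
  push Not at hall
  obtain ⟨t₀, ht₀⟩ := hall
  have hf0 : f 0 = 1 := le_antisymm (by simpa using hup 0) (h1 0)
  have ht₀0 : t₀ ≠ 0 := by rintro rfl; rw [hf0] at ht₀; norm_num at ht₀
  set g : ℝ → ℝ := fun r => (f r ^ 2 - 1) / r ^ 2 with hg
  have hgf : ∀ r, r ≠ 0 → f r ^ 2 = 1 + g r * r ^ 2 := by
    intro r hr
    simp only [hg]; field_simp; ring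
  have hG : 1 < g t₀ := by
    rw [hg]; simp only
    rw [lt_div_iff₀ (by positivity)]; linarith
  -- The value `g t₀ > 1` is not exceeded where `|t| ≤ d` or `|t| ≥ M`.
  obtain ⟨d, hd0, hd1, hdt, hdG⟩ : ∃ d : ℝ, 0 < d ∧ d ≤ 1 ∧ d ≤ |t₀| ∧ 1 + 2 * d ^ 2 ≤ g t₀ := by
    have hp : 0 < |t₀| := abs_pos.2 ht₀0
    refine ⟨min (min 1 |t₀|) ((g t₀ - 1) / 2), ?_, ?_, ?_, ?_⟩
    · exact lt_min (lt_min one_pos hp) (by linarith)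
    · exact (min_le_left _ _).trans (min_le_left _ _)
    · exact (min_le_left _ _).trans (min_le_right _ _)
    · have m0 : 0 < min (min 1 |t₀|) ((g t₀ - 1) / 2) :=
        lt_min (lt_min one_pos hp) (by linarith)
      have m1 : min (min 1 |t₀|) ((g t₀ - 1) / 2) ≤ 1 :=
        (min_le_left _ _).trans (min_le_left _ _)
      have m2 := min_le_right (min 1 |t₀|) ((g t₀ - 1) / 2)
      nlinarith
  set M : ℝ := max |t₀| (2 / (g t₀ - 1)) with hM
  have hfar : ∀ t, M ≤ |t| → g t ≤ g t₀ := by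
    intro t ht
    have hp : 0 < |t| := (abs_pos.2 ht₀0).trans_le ((le_max_left _ _).trans ht)
    have h2 : 2 / (g t₀ - 1) ≤ |t| := (le_max_right _ _).trans ht
    rw [div_le_iff₀ (by linarith)] at h2
    show (f t ^ 2 - 1) / t ^ 2 ≤ _
    rw [← sq_abs t, div_le_iff₀ (by positivity)]
    nlinarith [hup t, h1 t, mul_le_mul_of_nonneg_left h2 hp.le]
  have hK : IsCompact {t : ℝ | d ≤ |t| ∧ |t| ≤ M} := by
    refine (isCompact_Icc (a := -M) (b := M)).of_isClosed_subset ?_ ?_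
    · exact (isClosed_le continuous_const continuous_abs).inter
        (isClosed_le continuous_abs continuous_const)
    · intro t ht; exact abs_le.1 ht.2
  have hgc : ContinuousOn g {t : ℝ | d ≤ |t| ∧ |t| ≤ M} := by
    refine ContinuousOn.div (by fun_prop) (by fun_prop) ?_
    intro t ht
    have : t ≠ 0 := abs_pos.1 (hd0.trans_le ht.1)
    positivity
  obtain ⟨t₁, ht₁, hmax⟩ := hK.exists_isMaxOn ⟨t₀, hdt, le_max_left _ _⟩ hgc
  have h01 : g t₀ ≤ g t₁ := hmax ⟨hdt, le_max_left _ _⟩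
  have ht₁0 : t₁ ≠ 0 := abs_pos.1 (hd0.trans_le ht₁.1)
  refine ⟨g t₁, by linarith, ?_, Or.inr ⟨t₁, ht₁0, hgf t₁ ht₁0⟩⟩
  intro t
  rcases eq_or_ne t 0 with rfl | ht
  · simp [hf0]
  rw [hgf t ht]
  have : g t ≤ g t₁ := by
    rcases le_total |t| d with h | h
    · exact (quotient_near_zero f h1 hhalf hsym d hd0 hd1 t ht h).trans (hdG.trans h01)
    rcases le_total M |t| with h' | h'
    · exact (hfar t h').trans h01
    · exact hmax ⟨h, h'⟩
  gcongr

/-- On the plane spanned by `x` and a unit vector `v` in the kernel of a norming functional of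
`x`, the squared norm is a diagonal quadratic form. -/
lemma plane_form {V : Type*} [NormedAddCommGroup V] [NormedSpace ℝ V]
    (hD : ∀ p q : V, 4 * ‖p‖ * ‖q‖ ≤ ‖p + q‖ ^ 2 + ‖p - q‖ ^ 2)
    (x v : V) (hx : ‖x‖ = 1) (hv : ‖v‖ = 1) (hsupp : ∀ t : ℝ, 1 ≤ ‖x + t • v‖) :
    ∃ l : ℝ, ∀ a b : ℝ, ‖a • x + b • v‖ ^ 2 = a ^ 2 + l * b ^ 2 := by
  obtain ⟨l, hl, hle, hcontact⟩ := exists_touching_form (fun t => ‖x + t • v‖) (by fun_prop) hsupp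
    (fun t => by
      refine (norm_add_le _ _).trans ?_
      rw [hx, norm_smul, hv, mul_one, Real.norm_eq_abs])
    (fun t => by
      -- (D) for `x` and `x + t • v`
      have h := hD (x + t • v) x
      have e1 : x + t • v + x = (2 : ℝ) • (x + (t / 2) • v) := by module
      have e2 : x + t • v - x = t • v := by module
      rw [e1, e2, norm_smul, norm_smul, hv, hx, Real.norm_eq_abs, Real.norm_eq_abs, mul_one,
        mul_one, sq_abs, mul_pow, sq_abs] at h
      show ‖x + t • v‖ ≤ ‖x + (t / 2) • v‖ ^ 2 + t ^ 2 / 4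
      linarith)
    (fun t => by
      -- (D) for `x + t • v` and `x - t • v`
      have h := hD (x + t • v) (x + (-t) • v)
      have e1 : x + t • v + (x + (-t) • v) = (2 : ℝ) • x := by module
      have e2 : x + t • v - (x + (-t) • v) = (2 * t) • v := by module
      rw [e1, e2, norm_smul, norm_smul, hv, hx, Real.norm_eq_abs, Real.norm_eq_abs, mul_one,
        mul_one, sq_abs, sq_abs] at h
      show ‖x + t • v‖ * ‖x + (-t) • v‖ ≤ 1 + t ^ 2
      linarith)
  refine ⟨l, ?_⟩
  have hl0 : 0 < l := by linarith
  set m := Real.sqrt l with hm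
  have hm0 : 0 < m := Real.sqrt_pos.2 hl0
  have hmm : m ^ 2 = l := Real.sq_sqrt hl0.le
  have hdom : ∀ a b : ℝ, ‖a • x + b • v‖ ^ 2 ≤ a ^ 2 + l * b ^ 2 := by
    intro a b
    rcases eq_or_ne a 0 with rfl | ha
    · rw [zero_smul, zero_add, norm_smul, hv, mul_one, Real.norm_eq_abs, sq_abs]
      nlinarith [sq_nonneg b]
    · have e : a • x + b • v = a • (x + (b / a) • v) := by
        rw [smul_add, smul_smul, mul_div_cancel₀ _ ha]
      rw [e, norm_smul, mul_pow, Real.norm_eq_abs, sq_abs]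
      calc a ^ 2 * ‖x + (b / a) • v‖ ^ 2 ≤ a ^ 2 * (1 + l * (b / a) ^ 2) := by
            gcongr; exact hle _
        _ = a ^ 2 + l * b ^ 2 := by field_simp
  -- `c` parametrizes the `Q`-unit circle by angle.
  set c : ℝ → V := fun t => Real.cos t • x + (Real.sin t / m) • v with hcdef
  have hcc : Continuous c := by simp only [hcdef]; fun_prop
  have hadd : ∀ s t, c s + c t = (2 * Real.cos ((s - t) / 2)) • c ((s + t) / 2) := by
    intro s t
    have h1 : Real.cos s + Real.cos t
        = 2 * Real.cos ((s - t) / 2) * Real.cos ((s + t) / 2) := by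
      rw [Real.cos_add_cos]; ring
    have h2 : Real.sin s + Real.sin t
        = 2 * Real.cos ((s - t) / 2) * Real.sin ((s + t) / 2) := by
      rw [Real.sin_add_sin]; ring
    simp only [hcdef, smul_add, smul_smul]
    rw [← h1, ← mul_div_assoc, ← h2, add_div]
    module
  have hsub : ∀ s t, c s - c t
      = (2 * Real.sin ((s - t) / 2)) • c ((s + t) / 2 + Real.pi / 2) := by
    intro s t
    have h1 : Real.cos s - Real.cos t
        = 2 * Real.sin ((s - t) / 2) * -Real.sin ((s + t) / 2) := by
      rw [Real.cos_sub_cos]; ring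
    have h2 : Real.sin s - Real.sin t
        = 2 * Real.sin ((s - t) / 2) * Real.cos ((s + t) / 2) := by
      rw [Real.sin_sub_sin]
    simp only [hcdef, smul_add, smul_smul, Real.cos_add_pi_div_two, Real.sin_add_pi_div_two]
    rw [← h1, ← mul_div_assoc, ← h2, sub_div]
    module
  have hc0 : ‖c 0‖ ^ 2 = 1 := by simp [hcdef, hx]
  obtain ⟨θ, hθ, hsθ⟩ : ∃ θ, ‖c θ‖ ^ 2 = 1 ∧ Real.sin θ ≠ 0 := by
    rcases hcontact with h | ⟨t, ht, hft⟩
    · refine ⟨Real.pi / 2, ?_, by simp⟩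
      have : m = 1 := by rw [hm, h, Real.sqrt_one]
      simp [hcdef, this, hv]
    · refine ⟨Real.arctan (m * t), ?_, ?_⟩
      · have hcos : Real.cos (Real.arctan (m * t)) ≠ 0 := (Real.cos_arctan_pos _).ne'
        have e : c (Real.arctan (m * t)) = Real.cos (Real.arctan (m * t)) • (x + t • v) := by
          have : Real.sin (Real.arctan (m * t)) = m * t * Real.cos (Real.arctan (m * t)) := by
            have := Real.tan_mul_cos hcos
            rw [Real.tan_arctan] at this
            exact this.symm
          simp only [hcdef, this, smul_add, smul_smul]
          congr 2
          field_simp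
        have hft' : ‖x + t • v‖ ^ 2 = 1 + l * t ^ 2 := hft
        have hp : 0 < 1 + l * t ^ 2 := by positivity
        rw [e, norm_smul, mul_pow, Real.norm_eq_abs, sq_abs, Real.cos_sq_arctan, hft', mul_pow, hmm]
        field_simp
      · rw [Real.sin_arctan]
        positivity
  have hall := contact_everywhere (fun t => ‖c t‖ ^ 2) (by fun_prop)
    (fun t => by
      refine (hdom _ _).trans (le_of_eq ?_)
      rw [div_pow, hmm, mul_div_cancel₀ _ hl0.ne', Real.cos_sq_add_sin_sq])
    (fun t => by
      have : c (t + Real.pi) = -c t := by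
        simp only [hcdef, Real.cos_add_pi, Real.sin_add_pi, neg_div]
        module
      simp only [this, norm_neg])
    (fun s t hs ht => by
      have h := hD (c s) (c t)
      have hs1 : ‖c s‖ = 1 := (pow_eq_one_iff_of_nonneg (norm_nonneg _) two_ne_zero).1 hs
      have ht1 : ‖c t‖ = 1 := (pow_eq_one_iff_of_nonneg (norm_nonneg _) two_ne_zero).1 ht
      rw [hadd, hsub, norm_smul, norm_smul, mul_pow, mul_pow, Real.norm_eq_abs, Real.norm_eq_abs,
        sq_abs, sq_abs, hs1, ht1] at h
      show 1 ≤ Real.cos ((s - t) / 2) ^ 2 * ‖c ((s + t) / 2)‖ ^ 2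
        + Real.sin ((s - t) / 2) ^ 2 * ‖c ((s + t) / 2 + Real.pi / 2)‖ ^ 2
      linarith)
    θ hc0 hθ hsθ
  intro a b
  -- Polar coordinates for `(a, √l b)`.
  set z : ℂ := ⟨a, m * b⟩ with hz
  have h1 : ‖z‖ * Real.cos z.arg = a := Complex.norm_mul_cos_arg z
  have h2 : ‖z‖ * Real.sin z.arg = m * b := Complex.norm_mul_sin_arg z
  have e : a • x + b • v = ‖z‖ • c z.arg := by
    simp only [hcdef, smul_add, smul_smul]
    rw [h1, ← mul_div_assoc, h2, mul_div_cancel_left₀ _ hm0.ne']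
  have hcz : ‖c z.arg‖ ^ 2 = 1 := hall z.arg
  rw [e, norm_smul, mul_pow, hcz, norm_norm, mul_one, Complex.sq_norm, Complex.normSq_apply, ← hmm]
  ring

/-- **Corollary 3.3.** If a normed real vector space `V` is roughly isometric to a Ptolemy
metric space (via a rough isometry `φ : V → X` with constant `A`), then `V` is an inner
product space, i.e. its norm satisfies the parallelogram law. -/
theorem normed_space_roughly_isometric_to_ptolemy_is_inner_product_space
    {V : Type*} [NormedAddCommGroup V] [NormedSpace ℝ V]
    {X : Type*} [MetricSpace X] (hpt : IsPtolemy X)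
    (φ : V → X) (A : ℝ) (hA : 0 ≤ A)
    (hrough : ∀ v v' : V,
      dist v v' - A ≤ dist (φ v) (φ v') ∧ dist (φ v) (φ v') ≤ dist v v' + A)
    (hdense : ∀ x : X, ∃ v : V, dist x (φ v) ≤ A) :
    ∀ x y : V, ‖x + y‖ ^ 2 + ‖x - y‖ ^ 2 = 2 * ‖x‖ ^ 2 + 2 * ‖y‖ ^ 2 := by
  intro u w
  have hD := day_inequality (ptolemy_limit hpt φ A hrough)
  rcases eq_or_ne u 0 with rfl | hu
  · simp; ring
  have hu' : ‖u‖ ≠ 0 := norm_ne_zero_iff.2 hu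
  obtain ⟨ψ, hψ, hψu⟩ := exists_dual_vector ℝ u hu'
  have hψu' : ψ u = ‖u‖ := by simpa using hψu
  set x := ‖u‖⁻¹ • u with hxdef
  have hx : ‖x‖ = 1 := by rw [hxdef, norm_smul, norm_inv, norm_norm, inv_mul_cancel₀ hu']
  have hψx : ψ x = 1 := by
    rw [hxdef, map_smul, hψu', smul_eq_mul, inv_mul_cancel₀ hu']
  have hux : u = ‖u‖ • x := by rw [hxdef, smul_smul, mul_inv_cancel₀ hu', one_smul]
  set w' := w - ψ w • x with hw'
  have hww : w = ψ w • x + w' := by rw [hw']; abel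
  rcases eq_or_ne w' 0 with h0 | h0
  · rw [h0, add_zero] at hww
    generalize ψ w = b at hww
    generalize ‖u‖ = a at hux
    rw [hux, hww, ← add_smul, ← sub_smul]
    simp only [norm_smul, hx, mul_one, Real.norm_eq_abs, sq_abs]
    ring
  have h0' : ‖w'‖ ≠ 0 := norm_ne_zero_iff.2 h0
  set v := ‖w'‖⁻¹ • w' with hvdef
  have hv : ‖v‖ = 1 := by rw [hvdef, norm_smul, norm_inv, norm_norm, inv_mul_cancel₀ h0']
  have hwv : w' = ‖w'‖ • v := by rw [hvdef, smul_smul, mul_inv_cancel₀ h0', one_smul]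
  have hψv : ψ v = 0 := by
    rw [hvdef, map_smul, hw', map_sub, map_smul, hψx]; simp
  obtain ⟨l, hl⟩ := plane_form hD x v hx hv (fun t => by
    have h := ψ.le_opNorm (x + t • v)
    rw [hψ, one_mul, map_add, hψx, map_smul, hψv, smul_zero, add_zero, norm_one] at h
    exact h)
  rw [hwv] at hww
  generalize ψ w = b at hww
  generalize ‖w'‖ = d at hww
  generalize ‖u‖ = a at hux
  have e1 : u + w = (a + b) • x + d • v := by rw [hux, hww]; module
  have e2 : u - w = (a - b) • x + (-d) • v := by rw [hux, hww]; module
  rw [e1, e2, hl, hl, hww, hl]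
  ring
end

section
/- Let X be a geodesic Ptolemy metric space and let c : [0,∞) → X be a geodesic ray parameterized by arclength. Then the Busemann function b_c(x) = lim_{t→∞}(|x c(t)| − t) is well defined (the limit exists for every x) and is a convex function on X, i.e. b_c ∘ σ is convex for every geodesic σ in X. -/
/-- `c` is a geodesic on `I` (parameterized proportionally to arclength with speed `l ≥ 0`). -/
def IsGeodesicOn {X : Type*} [MetricSpace X] (c : ℝ → X) (I : Set ℝ) : Prop :=
  ∃ l : ℝ, 0 ≤ l ∧ ∀ s ∈ I, ∀ t ∈ I, dist (c s) (c t) = l * |s - t|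

/-- A metric space is geodesic if every pair of points is joined by a geodesic. -/
def IsGeodesicSpace (X : Type*) [MetricSpace X] : Prop :=
  ∀ x y : X, ∃ c : ℝ → X, c 0 = x ∧ c 1 = y ∧ IsGeodesicOn c (Set.Icc 0 1)

/-- In a Ptolemy space the distance to a point is convex along geodesics. -/
lemma IsPtolemy.convexOn_dist {X : Type*} [MetricSpace X] (hpt : IsPtolemy X) (p : X)
    {σ : ℝ → X} {I : Set ℝ} (hI : Convex ℝ I) (hσ : IsGeodesicOn σ I) :
    ConvexOn ℝ I (fun t => dist p (σ t)) := by
  refine ⟨hI, fun s hs t ht α β hα hβ hαβ => ?_⟩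
  obtain ⟨l, hl, hd⟩ := hσ
  have hm := hI hs ht hα hβ hαβ
  simp only [smul_eq_mul] at hm ⊢
  have hms : dist (σ (α * s + β * t)) (σ s) = β * dist (σ s) (σ t) := by
    rw [hd _ hm _ hs, hd _ hs _ ht,
      show α * s + β * t - s = -(β * (s - t)) by linear_combination s * hαβ,
      abs_neg, abs_mul, abs_of_nonneg hβ]
    ring
  have hmt : dist (σ (α * s + β * t)) (σ t) = α * dist (σ s) (σ t) := by
    rw [hd _ hm _ ht, hd _ hs _ ht,
      show α * s + β * t - t = α * (s - t) by linear_combination t * hαβ,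
      abs_mul, abs_of_nonneg hα]
    ring
  rcases (dist_nonneg (x := σ s) (y := σ t)).eq_or_lt with h0 | h0
  · -- A degenerate geodesic is constant, so both sides equal `dist p (σ s)`.
    have h1 : σ (α * s + β * t) = σ s := dist_eq_zero.1 (by rw [hms, ← h0, mul_zero])
    have h2 : σ s = σ t := dist_eq_zero.1 h0.symm
    rw [h1, ← h2, ← add_mul, hαβ, one_mul]
  · have h := hpt p (σ (α * s + β * t)) (σ s) (σ t)
    rw [hms, hmt] at h
    refine le_of_mul_le_mul_right ?_ h0
    linarith

/-- Along a unit-speed ray, `|x c(t)| - t` converges as `t → ∞`. -/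
lemma exists_tendsto_dist_ray_sub {X : Type*} [MetricSpace X] {c : ℝ → X}
    (hray : ∀ s ∈ Set.Ici (0 : ℝ), ∀ t ∈ Set.Ici (0 : ℝ), dist (c s) (c t) = |s - t|) (x : X) :
    ∃ r : ℝ, Filter.Tendsto (fun t => dist x (c t) - t) Filter.atTop (nhds r) := by
  -- `c` is unconstrained at negative times, so monotonicity is proved after truncating at `0`.
  have hanti : Antitone (fun t : ℝ => dist x (c (max t 0)) - max t 0) := by
    intro s t hst
    have hst' : max s 0 ≤ max t 0 := max_le_max_right 0 hst
    have h := hray (max s 0) (le_max_right s 0) (max t 0) (le_max_right t 0)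
    rw [abs_sub_comm, abs_of_nonneg (sub_nonneg.2 hst')] at h
    have := dist_triangle x (c (max s 0)) (c (max t 0))
    dsimp only
    linarith
  have hbdd : BddBelow (Set.range fun t : ℝ => dist x (c (max t 0)) - max t 0) := by
    refine ⟨-dist x (c 0), ?_⟩
    rintro _ ⟨t, rfl⟩
    have h := hray 0 Set.self_mem_Ici (max t 0) (le_max_right t 0)
    rw [zero_sub, abs_neg, abs_of_nonneg (le_max_right t 0)] at h
    have := dist_triangle_left (c 0) (c (max t 0)) x
    dsimp only
    linarith
  refine ⟨_, (tendsto_atTop_ciInf hanti hbdd).congr' ?_⟩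
  filter_upwards [Filter.eventually_ge_atTop 0] with t ht
  rw [max_eq_left ht]


/-- In a geodesic Ptolemy metric space, the Busemann function
`b_c(x) = lim_{t→∞} (|x c(t)| − t)` of a geodesic ray `c` parameterized by arclength is
well defined (the limit exists for every `x`) and convex. -/
theorem busemann_function_well_defined_and_convex
    {X : Type*} [MetricSpace X]
    (hgeo : IsGeodesicSpace X) (hpt : IsPtolemy X)
    (c : ℝ → X)
    (hray : ∀ s ∈ Set.Ici (0 : ℝ), ∀ t ∈ Set.Ici (0 : ℝ), dist (c s) (c t) = |s - t|) :
    ∃ b : X → ℝ,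
      (∀ x : X, Filter.Tendsto (fun t => dist x (c t) - t) Filter.atTop (nhds (b x))) ∧
      (∀ (σ : ℝ → X) (I : Set ℝ), Convex ℝ I → IsGeodesicOn σ I →
        ConvexOn ℝ I (fun t => b (σ t))) := by
  choose b hb using exists_tendsto_dist_ray_sub hray
  refine ⟨b, hb, fun σ I hI hσ => ⟨hI, fun s hs t ht α β hα hβ hαβ => ?_⟩⟩
  refine le_of_tendsto_of_tendsto' (hb _)
    (((hb (σ s)).const_smul α).add ((hb (σ t)).const_smul β)) fun T => ?_
  have h := (hpt.convexOn_dist (c T) hI hσ).2 hs ht hα hβ hαβ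
  simp only [smul_eq_mul, dist_comm (c T)] at h ⊢
  linear_combination h + T * hαβ
end

section
/- Let X be a Ptolemy metric space and let c₁, c₂ : [0,∞) → X be geodesic rays parameterized by arclength with lim_{t→∞} |c₁(t) c₂(t)|/t = 0. Then the difference b_{c₁} − b_{c₂} of the associated Busemann functions is a constant function on X. -/
/-! Write `|x cᵢ(t)| = t + bᵢ(x) + o(1)`. The Ptolemy inequality for `x, y, c₁(t), c₂(t)` gives
`|x c₁(t)| · |y c₂(t)| ≤ |x y| · |c₁(t) c₂(t)| + |x c₂(t)| · |y c₁(t)|`. The `t²` terms cancel, and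
since `|c₁(t) c₂(t)| = o(t)`, dividing by `t` and letting `t → ∞` yields
`b₁ x + b₂ y ≤ b₂ x + b₁ y`. Exchanging `x` and `y` gives equality. -/

open Filter Topology in
theorem busemann_cross_le {X : Type*} [MetricSpace X] (hpt : IsPtolemy X) (c₁ c₂ : ℝ → X)
    (hsub : Tendsto (fun t => dist (c₁ t) (c₂ t) / t) atTop (𝓝 0))
    (b₁ b₂ : X → ℝ)
    (hb₁ : ∀ x : X, Tendsto (fun t => dist x (c₁ t) - t) atTop (𝓝 (b₁ x)))
    (hb₂ : ∀ x : X, Tendsto (fun t => dist x (c₂ t) - t) atTop (𝓝 (b₂ x))) (x y : X) :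
    b₁ x + b₂ y ≤ b₂ x + b₁ y := by
  have hL := ((hb₁ x).add (hb₂ y)).add (((hb₁ x).mul (hb₂ y)).div_atTop tendsto_id)
  have hR := (hsub.const_mul (dist x y)).add
    (((hb₂ x).add (hb₁ y)).add (((hb₂ x).mul (hb₁ y)).div_atTop tendsto_id))
  simp only [mul_zero, add_zero, zero_add] at hL hR
  refine le_of_tendsto_of_tendsto hL hR ?_
  filter_upwards [eventually_gt_atTop (0 : ℝ)] with t ht
  have h := hpt x (c₁ t) y (c₂ t)
  rw [dist_comm (c₁ t) y] at h
  -- Both sides are those of the Ptolemy inequality with `t²` subtracted, divided by `t`.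
  have hl : (dist x (c₁ t) * dist y (c₂ t) - t ^ 2) / t =
      dist x (c₁ t) - t + (dist y (c₂ t) - t) +
        (dist x (c₁ t) - t) * (dist y (c₂ t) - t) / t := by
    field_simp
    ring
  have hr : (dist x y * dist (c₁ t) (c₂ t) + dist x (c₂ t) * dist y (c₁ t) - t ^ 2) / t =
      dist x y * (dist (c₁ t) (c₂ t) / t) + (dist x (c₂ t) - t + (dist y (c₁ t) - t) +
        (dist x (c₂ t) - t) * (dist y (c₁ t) - t) / t) := by
    field_simp
    ring
  simp only [id]
  rw [← hl, ← hr]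
  gcongr

/-- **Proposition 4.1.** In a Ptolemy metric space, two geodesic rays (parameterized by
arclength) at sublinear distance from each other have Busemann functions differing by a
constant. -/
theorem busemann_functions_of_sublinear_rays_differ_by_constant
    {X : Type*} [MetricSpace X] (hpt : IsPtolemy X)
    (c₁ c₂ : ℝ → X)
    (hray₁ : ∀ s ∈ Set.Ici (0 : ℝ), ∀ t ∈ Set.Ici (0 : ℝ), dist (c₁ s) (c₁ t) = |s - t|)
    (hray₂ : ∀ s ∈ Set.Ici (0 : ℝ), ∀ t ∈ Set.Ici (0 : ℝ), dist (c₂ s) (c₂ t) = |s - t|)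
    (hsub : Filter.Tendsto (fun t => dist (c₁ t) (c₂ t) / t) Filter.atTop (nhds 0))
    (b₁ b₂ : X → ℝ)
    (hb₁ : ∀ x : X, Filter.Tendsto (fun t => dist x (c₁ t) - t) Filter.atTop (nhds (b₁ x)))
    (hb₂ : ∀ x : X, Filter.Tendsto (fun t => dist x (c₂ t) - t) Filter.atTop (nhds (b₂ x))) :
    ∃ a : ℝ, ∀ x : X, b₁ x - b₂ x = a := by
  rcases isEmpty_or_nonempty X with _ | ⟨⟨y⟩⟩
  · exact ⟨0, fun x => isEmptyElim x⟩
  · refine ⟨b₁ y - b₂ y, fun x => ?_⟩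
    have h₁ := busemann_cross_le hpt c₁ c₂ hsub b₁ b₂ hb₁ hb₂ x y
    have h₂ := busemann_cross_le hpt c₁ c₂ hsub b₁ b₂ hb₁ hb₂ y x
    linarith
end

section
/- Let X be a geodesic Ptolemy metric space and let c₁, c₂ : ℝ → X be geodesic lines parameterized by arclength with lim_{t→∞} |c₁(t) c₂(t)|/t = 0 and lim_{t→∞} |c₁(−t) c₂(−t)|/t = 0. Then b_{c₁}⁺ + b_{c₁}⁻ = b_{c₂}⁺ + b_{c₂}⁻ as functions on X. -/
open Filter Topology

section BusemannBasics

variable {X : Type*} [MetricSpace X] {c : ℝ → X} {b : X → ℝ}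

lemma busemann_le_add_dist
    (hb : ∀ x : X, Tendsto (fun t => dist x (c t) - t) atTop (𝓝 (b x))) (x y : X) :
    b x ≤ dist x y + b y := by
  refine le_of_tendsto_of_tendsto' (hb x) ((hb y).const_add (dist x y)) fun t => ?_
  linarith [dist_triangle x y (c t)]

lemma busemann_le_dist_sub (hc : ∀ s t : ℝ, dist (c s) (c t) = |s - t|)
    (hb : ∀ x : X, Tendsto (fun t => dist x (c t) - t) atTop (𝓝 (b x))) (x : X) (r : ℝ) :
    b x ≤ dist x (c r) - r := by
  refine le_of_tendsto (hb x) ?_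
  filter_upwards [eventually_ge_atTop r] with t ht
  have h := dist_triangle x (c r) (c t)
  rw [hc, abs_sub_comm, abs_of_nonneg (sub_nonneg.2 ht)] at h
  linarith

/-- Convexity of a Busemann function along a geodesic line `d`, with denominators cleared. -/
lemma busemann_convex_along_line (hpt : IsPtolemy X) {d : ℝ → X}
    (hd : ∀ s t : ℝ, dist (d s) (d t) = |s - t|)
    (hb : ∀ x : X, Tendsto (fun t => dist x (c t) - t) atTop (𝓝 (b x)))
    {s m t : ℝ} (hsm : s ≤ m) (hmt : m ≤ t) :
    b (d m) * (t - s) ≤ b (d s) * (t - m) + b (d t) * (m - s) := by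
  refine le_of_tendsto_of_tendsto' ((hb (d m)).mul_const (t - s))
    (((hb (d s)).mul_const (t - m)).add ((hb (d t)).mul_const (m - s))) fun r => ?_
  have h := hpt (c r) (d m) (d s) (d t)
  rw [hd, hd, hd, abs_sub_comm s t, abs_sub_comm m t, abs_of_nonneg (by linarith : 0 ≤ t - s),
    abs_of_nonneg (by linarith : 0 ≤ t - m), abs_of_nonneg (by linarith : 0 ≤ m - s),
    dist_comm (c r), dist_comm (c r), dist_comm (c r)] at h
  linarith

/-- The Busemann function of a line is affine of slope `-1` along every line at sublinear distance
in the positive direction, also at negative parameters. -/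
lemma busemann_along_line (hpt : IsPtolemy X) {d : ℝ → X}
    (hc : ∀ s t : ℝ, dist (c s) (c t) = |s - t|)
    (hd : ∀ s t : ℝ, dist (d s) (d t) = |s - t|)
    (hsub : Tendsto (fun t => dist (c t) (d t) / t) atTop (𝓝 0))
    (hb : ∀ x : X, Tendsto (fun t => dist x (c t) - t) atTop (𝓝 (b x))) (r : ℝ) :
    b (d r) = b (d 0) - r := by
  have mono : ∀ s m : ℝ, s ≤ m → b (d s) + s ≤ b (d m) + m := by
    intro s m hsm
    have h := busemann_le_add_dist hb (d s) (d m)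
    rw [hd, abs_sub_comm, abs_of_nonneg (sub_nonneg.2 hsm)] at h
    linarith
  have anti : ∀ s m : ℝ, s ≤ m → b (d m) + m ≤ b (d s) + s := by
    intro s m hsm
    have hinv : ∀ k : ℝ, Tendsto (fun t : ℝ => k / t) atTop (𝓝 0) :=
      fun k => tendsto_const_nhds.div_atTop tendsto_id
    have hl : Tendsto (fun t : ℝ => (b (d m) + m) * (1 - s / t)) atTop
        (𝓝 ((b (d m) + m) * (1 - 0))) := ((hinv s).const_sub 1).const_mul _
    have hr : Tendsto (fun t : ℝ => (b (d s) + s) * (1 - m / t)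
        + dist (c t) (d t) / t * (m - s)) atTop
        (𝓝 ((b (d s) + s) * (1 - 0) + 0 * (m - s))) :=
      (((hinv m).const_sub 1).const_mul _).add (hsub.mul_const _)
    have key := le_of_tendsto_of_tendsto hl hr ?_
    · linarith
    filter_upwards [eventually_ge_atTop m, eventually_gt_atTop 0] with t hmt ht
    have h1 := busemann_convex_along_line hpt hd hb hsm hmt
    have h2 := busemann_le_dist_sub hc hb (d t) t
    rw [dist_comm] at h2
    have h3 := mul_le_mul_of_nonneg_right h2 (sub_nonneg.2 hsm)
    have e1 : (b (d m) + m) * (1 - s / t) = (b (d m) + m) * (t - s) / t := by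
      field_simp
    have e2 : (b (d s) + s) * (1 - m / t) + dist (c t) (d t) / t * (m - s)
        = ((b (d s) + s) * (t - m) + dist (c t) (d t) * (m - s)) / t := by
      field_simp
    rw [e1, e2]
    gcongr
    linarith
  rcases le_total 0 r with h | h
  · linarith [mono 0 r h, anti 0 r h]
  · linarith [mono r 0 h, anti r 0 h]

/-- If the Busemann function of `c` has slope `-1` along `d`, it exceeds that of `d` by at most its
value at `d 0`. -/
lemma busemann_le_busemann_add {d : ℝ → X} {b' : X → ℝ}
    (hb : ∀ x : X, Tendsto (fun t => dist x (c t) - t) atTop (𝓝 (b x)))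
    (hb' : ∀ x : X, Tendsto (fun t => dist x (d t) - t) atTop (𝓝 (b' x)))
    (haff : ∀ r, b (d r) = b (d 0) - r) (x : X) : b x ≤ b' x + b (d 0) := by
  refine ge_of_tendsto' ((hb' x).add_const (b (d 0))) fun t => ?_
  linarith [busemann_le_add_dist hb x (d t), haff t]

end BusemannBasics

lemma busemann_sum_le {X : Type*} [MetricSpace X] (hpt : IsPtolemy X) (c d : ℝ → X)
    (hc : ∀ s t : ℝ, dist (c s) (c t) = |s - t|)
    (hd : ∀ s t : ℝ, dist (d s) (d t) = |s - t|)
    (hsubp : Tendsto (fun t => dist (c t) (d t) / t) atTop (𝓝 0))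
    (hsubm : Tendsto (fun t => dist (c (-t)) (d (-t)) / t) atTop (𝓝 0))
    (bp bm b'p b'm : X → ℝ)
    (hbp : ∀ x : X, Tendsto (fun t => dist x (c t) - t) atTop (𝓝 (bp x)))
    (hbm : ∀ x : X, Tendsto (fun t => dist x (c (-t)) - t) atTop (𝓝 (bm x)))
    (hb'p : ∀ x : X, Tendsto (fun t => dist x (d t) - t) atTop (𝓝 (b'p x)))
    (hb'm : ∀ x : X, Tendsto (fun t => dist x (d (-t)) - t) atTop (𝓝 (b'm x))) (x : X) :
    bp x + bm x ≤ b'p x + b'm x := by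
  have rev : ∀ e : ℝ → X, (∀ s t : ℝ, dist (e s) (e t) = |s - t|) →
      ∀ s t : ℝ, dist (e (-s)) (e (-t)) = |s - t| := by
    intro e he s t
    rw [he, abs_sub_comm]
    congr 1
    ring
  have affp := busemann_along_line hpt hc hd hsubp hbp
  have affm := busemann_along_line (c := fun t => c (-t)) (d := fun t => d (-t)) hpt
    (rev c hc) (rev d hd) hsubm hbm
  have lep := busemann_le_busemann_add hbp hb'p affp x
  have lem := busemann_le_busemann_add (c := fun t => c (-t)) (d := fun t => d (-t)) hbm hb'm affm x
  simp only [neg_zero] at affm lem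
  have hsum : bp (d 0) + bm (d 0) ≤ 0 := by
    have hl : Tendsto (fun L : ℝ => bp (d 0) + bm (d 0) + bp (d 0) * bm (d 0) / L) atTop
        (𝓝 (bp (d 0) + bm (d 0) + 0)) :=
      (tendsto_const_nhds.div_atTop tendsto_id).const_add _
    have hr : Tendsto (fun L : ℝ => dist (d 0) (c 0) * (dist (c L) (d L) / L)) atTop
        (𝓝 (dist (d 0) (c 0) * 0)) := hsubp.const_mul _
    have key := le_of_tendsto_of_tendsto hl hr ?_
    · linarith
    filter_upwards [eventually_gt_atTop 0, eventually_ge_atTop (-bm (d 0))]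
      with L hL hLm
    have diag1 : L + bp (d 0) ≤ dist (d 0) (c L) := by
      linarith [busemann_le_dist_sub hc hbp (d 0) L]
    have diag2 : L + bm (d 0) ≤ dist (c 0) (d L) := by
      have h := busemann_le_dist_sub (rev c hc) hbm (d L) 0
      have h' := affm (-L)
      rw [neg_neg] at h'
      rw [neg_zero, dist_comm] at h
      linarith
    have h := hpt (d 0) (c L) (c 0) (d L)
    rw [hd, hc, zero_sub, sub_zero, abs_neg, abs_of_pos hL] at h
    have hmul : (L + bp (d 0)) * (L + bm (d 0)) ≤ dist (d 0) (c L) * dist (c 0) (d L) :=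
      mul_le_mul diag1 diag2 (by linarith) dist_nonneg
    have e1 : bp (d 0) + bm (d 0) + bp (d 0) * bm (d 0) / L
        = ((bp (d 0) + bm (d 0)) * L + bp (d 0) * bm (d 0)) / L := by
      field_simp
    rw [e1, ← mul_div_assoc]
    gcongr
    nlinarith
  linarith

/-- **Proposition 4.3.** Let `c₁, c₂ : ℝ → X` be geodesic lines parameterized by arclength in
a geodesic Ptolemy metric space with sublinear distance in both directions. Then
`b₁⁺ + b₁⁻ = b₂⁺ + b₂⁻` as functions on `X`. -/
theorem busemann_sums_of_sublinear_lines_agree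
    {X : Type*} [MetricSpace X]
    (hgeo : IsGeodesicSpace X) (hpt : IsPtolemy X)
    (c₁ c₂ : ℝ → X)
    (hline₁ : ∀ s t : ℝ, dist (c₁ s) (c₁ t) = |s - t|)
    (hline₂ : ∀ s t : ℝ, dist (c₂ s) (c₂ t) = |s - t|)
    (hsubp : Filter.Tendsto (fun t => dist (c₁ t) (c₂ t) / t) Filter.atTop (nhds 0))
    (hsubm : Filter.Tendsto (fun t => dist (c₁ (-t)) (c₂ (-t)) / t) Filter.atTop (nhds 0))
    (b₁p b₁m b₂p b₂m : X → ℝ)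
    (hb₁p : ∀ x : X, Filter.Tendsto (fun t => dist x (c₁ t) - t) Filter.atTop (nhds (b₁p x)))
    (hb₁m : ∀ x : X, Filter.Tendsto (fun t => dist x (c₁ (-t)) - t) Filter.atTop (nhds (b₁m x)))
    (hb₂p : ∀ x : X, Filter.Tendsto (fun t => dist x (c₂ t) - t) Filter.atTop (nhds (b₂p x)))
    (hb₂m : ∀ x : X, Filter.Tendsto (fun t => dist x (c₂ (-t)) - t) Filter.atTop (nhds (b₂m x))) :
    ∀ x : X, b₁p x + b₁m x = b₂p x + b₂m x := by
  intro x
  refine le_antisymm ?_ ?_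
  · exact busemann_sum_le hpt c₁ c₂ hline₁ hline₂ hsubp hsubm _ _ _ _ hb₁p hb₁m hb₂p hb₂m x
  · simp only [dist_comm (c₁ _) (c₂ _)] at hsubp hsubm
    exact busemann_sum_le hpt c₂ c₁ hline₂ hline₁ hsubp hsubm _ _ _ _ hb₂p hb₂m hb₁p hb₁m x
end

section
/- Let X be a geodesic Ptolemy metric space and let Γ ⊂ ISO(X) act properly and cocompactly on X. Then for every γ ∈ Γ: (1) the displacement function d_γ(x) = |x γx| attains its minimum on X; (2) min d_γ = 0 if and only if γ is a torsion element (γᵐ = id for some m ≥ 1); and (3) if γ is not a torsion element, then the set Ax(γ) of points lying on axes of γ equals the set of points where d_γ attains its minimum; in particular every non-torsion γ has an axis. -/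
/-- A geodesic line `c : ℝ → X` parameterized by arclength is an axis of an isometry `γ`
if `γ (c t) = c (t + L)` for some `L > 0` and all `t`. `x` lies on an axis of `γ` if some
axis of `γ` passes through `x`. -/
def LiesOnAxisOf {X : Type*} [MetricSpace X] (γ : X ≃ᵢ X) (x : X) : Prop :=
  ∃ c : ℝ → X, (∀ s t : ℝ, dist (c s) (c t) = |s - t|) ∧
    (∃ L > 0, ∀ t : ℝ, γ (c t) = c (t + L)) ∧ ∃ t : ℝ, c t = x

/-! ### Finiteness of elements of bounded displacement -/

/-- Properness at `y` also bounds the elements carrying `y` near an arbitrary point `x`: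
two of them differ by an element moving `y` by little. -/
lemma finite_orbit_near {X : Type*} [MetricSpace X] (Γ : Subgroup (X ≃ᵢ X)) {y : X} {r : ℝ}
    (hr : {γ : Γ | dist y ((γ : X ≃ᵢ X) y) < r}.Finite) (x : X) :
    {γ : Γ | dist x ((γ : X ≃ᵢ X) y) < r / 2}.Finite := by
  rcases Set.eq_empty_or_nonempty {γ : Γ | dist x ((γ : X ≃ᵢ X) y) < r / 2} with h | ⟨g₀, hg₀⟩
  · rw [h]; exact Set.finite_empty
  · refine (hr.image (fun g => g₀ * g)).subset ?_
    intro g hg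
    refine ⟨g₀⁻¹ * g, ?_, by simp⟩
    simp only [Set.mem_ofPred_eq] at hg hg₀ ⊢
    have e : dist y (((g₀⁻¹ * g : Γ) : X ≃ᵢ X) y)
        = dist ((g₀ : X ≃ᵢ X) y) ((g : X ≃ᵢ X) y) := by
      rw [← (g₀ : X ≃ᵢ X).dist_eq y]
      simp [IsometryEquiv.mul_apply]
    rw [e]
    linarith [dist_triangle_left ((g₀ : X ≃ᵢ X) y) ((g : X ≃ᵢ X) y) x]

/-- A uniform version of properness over a compact set. -/
lemma exists_uniform_radius {X : Type*} [MetricSpace X] (Γ : Subgroup (X ≃ᵢ X))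
    (hproper : ∀ x : X, ∃ r > 0, {γ : Γ | dist x ((γ : X ≃ᵢ X) x) < r}.Finite)
    {K : Set X} (hK : IsCompact K) :
    ∃ ε > 0, {g : Γ | ∃ k ∈ K, ∃ k' ∈ K, dist k ((g : X ≃ᵢ X) k') < ε}.Finite := by
  choose r hr0 hr using hproper
  obtain ⟨t, -, htK⟩ := hK.elim_nhds_subcover (fun y => Metric.ball y (r y / 8))
    (fun y _ => Metric.ball_mem_nhds y (by linarith [hr0 y]))
  have hε : ∃ ε > 0, ∀ y ∈ t, ε ≤ r y / 8 := by
    classical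
    clear htK
    induction t using Finset.induction_on with
    | empty => exact ⟨1, one_pos, by simp⟩
    | insert a s _ ih =>
      obtain ⟨ε, h0, h⟩ := ih
      refine ⟨min ε (r a / 8), lt_min h0 (by linarith [hr0 a]), ?_⟩
      intro y hy
      rcases Finset.mem_insert.1 hy with rfl | hy
      · exact min_le_right _ _
      · exact (min_le_left _ _).trans (h y hy)
  obtain ⟨ε, hε0, hε⟩ := hε
  obtain ⟨t', -, ht'K⟩ := hK.elim_nhds_subcover (fun y => Metric.ball y ε)
    (fun y _ => Metric.ball_mem_nhds y hε0)
  refine ⟨ε, hε0, Set.Finite.subset (s := ⋃ x ∈ t', ⋃ y ∈ t,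
    {g : Γ | dist x ((g : X ≃ᵢ X) y) < r y / 2}) ?_ ?_⟩
  · exact t'.finite_toSet.biUnion fun x _ => t.finite_toSet.biUnion fun y _ =>
      finite_orbit_near Γ (hr y) x
  · rintro g ⟨k, hk, k', hk', hd⟩
    obtain ⟨x, hx, hkx⟩ := Set.mem_iUnion₂.1 (ht'K hk)
    obtain ⟨y, hy, hky⟩ := Set.mem_iUnion₂.1 (htK hk')
    refine Set.mem_iUnion₂.2 ⟨x, hx, Set.mem_iUnion₂.2 ⟨y, hy, ?_⟩⟩
    simp only [Metric.mem_ball, Set.mem_ofPred_eq] at hkx hky ⊢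
    have e := (g : X ≃ᵢ X).dist_eq k' y
    have h1 := dist_triangle4 x k ((g : X ≃ᵢ X) k') ((g : X ≃ᵢ X) y)
    rw [dist_comm x k, e] at h1
    linarith [hε y hy, hr0 y]

/-- Only finitely many elements move some point of `K` to within a given distance of `K`. -/
lemma finite_near {X : Type*} [MetricSpace X] (hgeo : IsGeodesicSpace X) (Γ : Subgroup (X ≃ᵢ X))
    (hproper : ∀ x : X, ∃ r > 0, {γ : Γ | dist x ((γ : X ≃ᵢ X) x) < r}.Finite)
    {K : Set X} (hK : IsCompact K)
    (hcov : ∀ x : X, ∃ γ : Γ, ∃ k ∈ K, (γ : X ≃ᵢ X) k = x) (R : ℝ) :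
    {g : Γ | ∃ k ∈ K, ∃ k' ∈ K, dist k ((g : X ≃ᵢ X) k') ≤ R}.Finite := by
  obtain ⟨ε, hε, hfin⟩ := exists_uniform_radius Γ hproper hK
  have key : ∀ n : ℕ,
      {g : Γ | ∃ k ∈ K, ∃ k' ∈ K, dist k ((g : X ≃ᵢ X) k') ≤ n * (ε / 2)}.Finite := by
    intro n
    induction n with
    | zero =>
      refine hfin.subset ?_
      rintro g ⟨k, hk, k', hk', hd⟩
      refine ⟨k, hk, k', hk', ?_⟩
      norm_num at hd
      rw [hd, dist_self]
      exact hε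
    | succ n ih =>
      refine (ih.image2 (fun a b => a * b) hfin).subset ?_
      rintro g ⟨k, hk, k', hk', hd⟩
      obtain ⟨c, hc0, hc1, l, hl, hc⟩ := hgeo k ((g : X ≃ᵢ X) k')
      have hn : (0 : ℝ) < n + 1 := by positivity
      -- the point splitting the geodesic in the ratio `n : 1`
      have hmem : (n : ℝ) / (n + 1) ∈ Set.Icc (0 : ℝ) 1 :=
        ⟨by positivity, by rw [div_le_one hn]; linarith⟩
      have m0 : (0 : ℝ) ∈ Set.Icc (0 : ℝ) 1 := by simp
      have m1 : (1 : ℝ) ∈ Set.Icc (0 : ℝ) 1 := by simp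
      have h01 := hc 0 m0 1 m1
      have h0 := hc 0 m0 _ hmem
      have h1 := hc _ hmem 1 m1
      rw [hc0, hc1] at h01
      rw [hc0, zero_sub, abs_neg, abs_of_nonneg hmem.1] at h0
      rw [hc1, abs_sub_comm, abs_of_nonneg (by linarith [hmem.2])] at h1
      norm_num at h01
      have hl' : l ≤ (n + 1) * (ε / 2) := by rw [← h01]; push_cast at hd; exact hd
      obtain ⟨h, k'', hk'', hz⟩ := hcov (c ((n : ℝ) / (n + 1)))
      refine ⟨h, ⟨k, hk, k'', hk'', ?_⟩, h⁻¹ * g, ⟨k'', hk'', k', hk', ?_⟩, by simp⟩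
      · rw [hz, h0]
        calc l * (n / (n + 1)) ≤ (n + 1) * (ε / 2) * (n / (n + 1)) := by gcongr
          _ = n * (ε / 2) := by field_simp
      · rw [← (h : X ≃ᵢ X).dist_eq k'']
        have e : (h : X ≃ᵢ X) (((h⁻¹ * g : Γ) : X ≃ᵢ X) k') = (g : X ≃ᵢ X) k' := by
          simp [IsometryEquiv.mul_apply]
        rw [e, hz, h1]
        calc l * (1 - n / (n + 1)) ≤ (n + 1) * (ε / 2) * (1 - n / (n + 1)) := by
              gcongr; linarith [hmem.2]
          _ = ε / 2 := by field_simp; ring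
          _ < ε := by linarith
  obtain ⟨n, hn⟩ := exists_nat_ge (R / (ε / 2))
  refine (key n).subset ?_
  rintro g ⟨k, hk, k', hk', hd⟩
  exact ⟨k, hk, k', hk', hd.trans ((div_le_iff₀ (by linarith)).1 hn)⟩

lemma finite_displacement {X : Type*} [MetricSpace X] (hgeo : IsGeodesicSpace X)
    (Γ : Subgroup (X ≃ᵢ X))
    (hproper : ∀ x : X, ∃ r > 0, {γ : Γ | dist x ((γ : X ≃ᵢ X) x) < r}.Finite)
    {K : Set X} (hK : IsCompact K)
    (hcov : ∀ x : X, ∃ γ : Γ, ∃ k ∈ K, (γ : X ≃ᵢ X) k = x) (x : X) (R : ℝ) :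
    {g : Γ | dist x ((g : X ≃ᵢ X) x) ≤ R}.Finite := by
  obtain ⟨h, k, hk, rfl⟩ := hcov x
  refine ((finite_near hgeo Γ hproper hK hcov R).image (fun g => h * g * h⁻¹)).subset ?_
  intro g hg
  refine ⟨h⁻¹ * g * h, ⟨k, hk, k, hk, ?_⟩, by group⟩
  rw [← (h : X ≃ᵢ X).dist_eq k]
  simpa [IsometryEquiv.mul_apply] using hg

/-! ### The displacement function attains its minimum -/

lemma exists_min_displacement {X : Type*} [MetricSpace X] [Nonempty X]
    (hgeo : IsGeodesicSpace X) (Γ : Subgroup (X ≃ᵢ X))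
    (hproper : ∀ x : X, ∃ r > 0, {γ : Γ | dist x ((γ : X ≃ᵢ X) x) < r}.Finite)
    {K : Set X} (hK : IsCompact K)
    (hcov : ∀ x : X, ∃ γ : Γ, ∃ k ∈ K, (γ : X ≃ᵢ X) k = x) (γ : Γ) :
    ∃ x₀ : X, ∀ x : X, dist x₀ ((γ : X ≃ᵢ X) x₀) ≤ dist x ((γ : X ≃ᵢ X) x) := by
  obtain ⟨x₁⟩ := ‹Nonempty X›
  set R := dist x₁ ((γ : X ≃ᵢ X) x₁) with hR
  -- the conjugates of `γ` that move some point of `K` by at most `R`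
  set C : Set Γ := {h | (∃ g : Γ, h = g⁻¹ * γ * g) ∧ ∃ k ∈ K, dist k ((h : X ≃ᵢ X) k) ≤ R} with hC
  have hCfin : C.Finite := (finite_near hgeo Γ hproper hK hcov R).subset
    fun h ⟨_, k, hk, hd⟩ => ⟨k, hk, k, hk, hd⟩
  have conj : ∀ (g : Γ) (k : X), dist k (((g⁻¹ * γ * g : Γ) : X ≃ᵢ X) k)
      = dist ((g : X ≃ᵢ X) k) ((γ : X ≃ᵢ X) ((g : X ≃ᵢ X) k)) := by
    intro g k
    rw [← (g : X ≃ᵢ X).dist_eq k]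
    simp [IsometryEquiv.mul_apply]
  set P : Set ℝ := ⋃ h ∈ C, (fun k => dist k ((h : X ≃ᵢ X) k)) '' K with hP
  have hPc : IsCompact P := hCfin.isCompact_biUnion fun h _ =>
    hK.image (continuous_id.dist (h : X ≃ᵢ X).continuous)
  have hPmem : ∀ x : X, dist x ((γ : X ≃ᵢ X) x) ≤ R → dist x ((γ : X ≃ᵢ X) x) ∈ P := by
    intro x hx
    obtain ⟨g, k, hk, rfl⟩ := hcov x
    refine Set.mem_iUnion₂.2 ⟨g⁻¹ * γ * g, ⟨⟨g, rfl⟩, k, hk, ?_⟩, k, hk, ?_⟩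
    · rw [conj]; exact hx
    · exact conj g k
  obtain ⟨m, hm, hmin⟩ := hPc.exists_isLeast ⟨_, hPmem x₁ le_rfl⟩
  obtain ⟨h, ⟨⟨g, rfl⟩, -⟩, k, -, hkm⟩ := Set.mem_iUnion₂.1 hm
  refine ⟨(g : X ≃ᵢ X) k, fun x => ?_⟩
  rw [← conj]
  have hkm' : dist k (((g⁻¹ * γ * g : Γ) : X ≃ᵢ X) k) = m := hkm
  rw [hkm']
  rcases le_or_gt (dist x ((γ : X ≃ᵢ X) x)) R with hx | hx
  · exact hmin (hPmem x hx)
  · exact (hmin (hPmem x₁ le_rfl)).trans hx.le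

/-! ### Axes -/

/-- In a Ptolemy space a local geodesic (here: of speed `L`, on all intervals of length at
most `1`) is a geodesic, because distance functions are convex along it. -/
lemma local_geodesic {X : Type*} [MetricSpace X] (hpt : IsPtolemy X) {τ : ℝ → X} {L : ℝ}
    (hL : 0 < L) (hτ : ∀ s t, s ≤ t → t ≤ s + 1 → dist (τ s) (τ t) = L * (t - s)) (s t : ℝ)
    (hst : s ≤ t) : dist (τ s) (τ t) = L * (t - s) := by
  obtain ⟨n, hn⟩ := exists_nat_ge (2 * (t - s) + 1)
  have hn0 : (0 : ℝ) < n := by linarith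
  rcases hst.eq_or_lt with rfl | hlt
  · simp
  set h := (t - s) / n with hh
  have h0 : 0 < h := div_pos (by linarith) hn0
  have h2 : h ≤ 1 / 2 := by rw [hh, div_le_iff₀ hn0]; linarith
  have ht : t = s + n * h := by rw [hh]; field_simp; ring
  set a : ℕ → ℝ := fun i => dist (τ s) (τ (s + i * h)) with ha
  have a0 : a 0 = 0 := by simp [ha]
  have a1 : a 1 = L * h := by
    simp only [ha]
    rw [hτ _ _ (by push_cast; linarith) (by push_cast; linarith)]
    push_cast; ring
  -- midpoint convexity of the distance to `τ s`
  have conv : ∀ i : ℕ, 2 * a (i + 1) ≤ a i + a (i + 2) := by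
    intro i
    have p := hpt (τ (s + i * h)) (τ (s + (i + 2 : ℕ) * h)) (τ s) (τ (s + (i + 1 : ℕ) * h))
    rw [hτ (s + i * h) (s + (i + 2 : ℕ) * h) (by push_cast; nlinarith) (by push_cast; nlinarith),
      hτ (s + i * h) (s + (i + 1 : ℕ) * h) (by push_cast; nlinarith) (by push_cast; nlinarith),
      dist_comm (τ (s + (i + 2 : ℕ) * h)) (τ (s + (i + 1 : ℕ) * h)),
      hτ (s + (i + 1 : ℕ) * h) (s + (i + 2 : ℕ) * h) (by push_cast; nlinarith)
        (by push_cast; nlinarith), dist_comm _ (τ s), dist_comm _ (τ s)] at p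
    have e : L * h * (2 * a (i + 1)) ≤ L * h * (a i + a (i + 2)) := by
      simp only [ha]
      refine le_trans (le_of_eq ?_) (p.trans (le_of_eq ?_)) <;> (push_cast; ring)
    exact le_of_mul_le_mul_left e (by positivity)
  have inc : ∀ i : ℕ, L * h ≤ a (i + 1) - a i := by
    intro i
    induction i with
    | zero => rw [zero_add, a0, a1]; linarith
    | succ i ih => linarith [conv i]
  have low : ∀ i : ℕ, i * (L * h) ≤ a i := by
    intro i
    induction i with
    | zero => simp [a0]
    | succ i ih => push_cast; linarith [inc i]
  have up : ∀ i : ℕ, a i ≤ i * (L * h) := by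
    intro i
    induction i with
    | zero => simp [a0]
    | succ i ih =>
      have q := dist_triangle (τ s) (τ (s + i * h)) (τ (s + (i + 1 : ℕ) * h))
      rw [hτ (s + i * h) (s + (i + 1 : ℕ) * h) (by push_cast; nlinarith)
        (by push_cast; nlinarith)] at q
      simp only [ha] at ih ⊢
      push_cast at q ⊢
      nlinarith
  have := le_antisymm (up n) (low n)
  simp only [ha] at this
  rw [← ht] at this
  rw [this, hh]
  field_simp

lemma exists_axis_of_min {X : Type*} [MetricSpace X] (hgeo : IsGeodesicSpace X)
    (hpt : IsPtolemy X) (γ : X ≃ᵢ X) (x : X) (hmin : ∀ y, dist x (γ x) ≤ dist y (γ y))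
    (hpos : 0 < dist x (γ x)) : LiesOnAxisOf γ x := by
  set L := dist x (γ x) with hLdef
  obtain ⟨c, hc0, hc1, l, hl, hc⟩ := hgeo x (γ x)
  have hlL : l = L := by
    have := hc 0 (by simp) 1 (by simp)
    rw [hc0, hc1] at this
    norm_num at this
    rw [hLdef, this]
  subst hlL
  -- the concatenation of the translates `γⁿ c`, with `γⁿ c` placed on `[n, n + 1]`
  set τ : ℝ → X := fun s => (γ ^ ⌊s⌋) (c (Int.fract s)) with hτ
  have τ_eq : ∀ (n : ℤ) (s : ℝ), n ≤ s → s ≤ n + 1 → τ s = (γ ^ n) (c (s - n)) := by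
    intro n s h1 h2
    rcases h2.eq_or_lt with h | h
    · have hs : s = ((n + 1 : ℤ) : ℝ) := by push_cast; exact h
      simp only [hτ]
      rw [hs, Int.floor_intCast, Int.fract_intCast, hc0]
      push_cast
      rw [add_sub_cancel_left, hc1, zpow_add_one, IsometryEquiv.mul_apply]
    · have hf : ⌊s⌋ = n := Int.floor_eq_iff.2 ⟨h1, h⟩
      simp only [hτ, Int.fract, hf]
  have τ_shift : ∀ s, τ (s + 1) = γ (τ s) := by
    intro s
    simp only [hτ]
    rw [Int.floor_add_one, Int.fract_add_one, add_comm, zpow_one_add, IsometryEquiv.mul_apply]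
  have seg : ∀ (n : ℤ) (s t : ℝ), n ≤ s → s ≤ t → t ≤ n + 1 →
      dist (τ s) (τ t) = L * (t - s) := by
    intro n s t h1 h2 h3
    rw [τ_eq n s h1 (h2.trans h3), τ_eq n t (h1.trans h2) h3, (γ ^ n).dist_eq,
      hc _ ⟨by linarith, by linarith⟩ _ ⟨by linarith, by linarith⟩, abs_sub_comm,
      abs_of_nonneg (by linarith)]
    ring
  have lip : ∀ s t, s ≤ t → t ≤ s + 1 → dist (τ s) (τ t) ≤ L * (t - s) := by
    intro s t h1 h2
    have f1 := Int.floor_le s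
    have f2 := Int.lt_floor_add_one s
    rcases le_total t (⌊s⌋ + 1) with h | h
    · exact (seg ⌊s⌋ s t f1 h1 h).le
    · have e1 := seg ⌊s⌋ s (⌊s⌋ + 1) f1 f2.le le_rfl
      have e2 := seg (⌊s⌋ + 1) (⌊s⌋ + 1) t (by push_cast; exact le_rfl) h
        (by push_cast; linarith)
      linarith [dist_triangle (τ s) (τ (⌊s⌋ + 1)) (τ t)]
  -- minimality at `τ s` forces equality in the Lipschitz bound on `[s, s + 1]`
  have loc : ∀ s t, s ≤ t → t ≤ s + 1 → dist (τ s) (τ t) = L * (t - s) := by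
    intro s t h1 h2
    refine le_antisymm (lip s t h1 h2) ?_
    have m := hmin (τ s)
    rw [← τ_shift] at m
    linarith [dist_triangle (τ s) (τ t) (τ (s + 1)), lip t (s + 1) h2 (by linarith)]
  have glob := local_geodesic hpt hpos loc
  refine ⟨fun t => τ (t / L), ?_, ⟨L, hpos, ?_⟩, 0, ?_⟩
  · have main : ∀ s t : ℝ, s ≤ t → dist (τ (s / L)) (τ (t / L)) = t - s := by
      intro s t h
      rw [glob _ _ (by gcongr)]
      field_simp
    intro s t
    rcases le_total s t with h | h
    · rw [main s t h, abs_sub_comm, abs_of_nonneg (by linarith)]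
    · rw [dist_comm, main t s h, abs_of_nonneg (by linarith)]
  · intro t
    have : (t + L) / L = t / L + 1 := by field_simp
    simp only [this, τ_shift]
  · simp [hτ, hc0]

/-- Powers of an isometry translate along its axes. -/
lemma axis_iterate {X : Type*} [MetricSpace X] {γ : X ≃ᵢ X} {x : X} (h : LiesOnAxisOf γ x) :
    ∃ L > 0, dist x (γ x) = L ∧ ∀ n : ℕ, dist x ((γ ^ n) x) = n * L := by
  obtain ⟨c, hc, ⟨L, hL, hs⟩, t, rfl⟩ := h
  have it : ∀ n : ℕ, (γ ^ n) (c t) = c (t + n * L) := by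
    intro n
    induction n with
    | zero => simp
    | succ n ih =>
      rw [pow_succ', IsometryEquiv.mul_apply, ih, hs]
      congr 1; push_cast; ring
  refine ⟨L, hL, ?_, fun n => ?_⟩
  · rw [hs, hc, abs_sub_comm]; simp [hL.le]
  · rw [it, hc, abs_sub_comm, add_sub_cancel_left, abs_of_nonneg (by positivity)]

lemma axis_le_displacement {X : Type*} [MetricSpace X] {γ : X ≃ᵢ X} {x : X}
    (h : LiesOnAxisOf γ x) (y : X) : dist x (γ x) ≤ dist y (γ y) := by
  obtain ⟨L, -, hx, hn⟩ := axis_iterate h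
  rw [hx]
  have hy : ∀ n : ℕ, dist y ((γ ^ n) y) ≤ n * dist y (γ y) := by
    intro n
    induction n with
    | zero => simp
    | succ n ih =>
      have := dist_triangle y ((γ ^ n) y) ((γ ^ (n + 1)) y)
      rw [pow_succ, IsometryEquiv.mul_apply, (γ ^ n).dist_eq] at this
      rw [pow_succ, IsometryEquiv.mul_apply]
      push_cast
      linarith
  by_contra! hlt
  obtain ⟨n, hn'⟩ := exists_nat_gt (2 * dist x y / (L - dist y (γ y)))
  rw [div_lt_iff₀ (by linarith)] at hn'
  have h4 := dist_triangle4 x y ((γ ^ n) y) ((γ ^ n) x)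
  rw [(γ ^ n).dist_eq, hn n, dist_comm y x] at h4
  linarith [hy n]

/-- **Lemma 5.1 (1)-(3).** Let `Γ ⊂ ISO(X)` act properly and cocompactly on a geodesic
Ptolemy metric space `X`, and let `γ ∈ Γ`. Then the displacement function
`d_γ(x) = |x γx|` attains its minimum; the minimum is `0` iff `γ` is a torsion element;
and if `γ` is not torsion then `Ax(γ)` is exactly the set of minima of `d_γ`. -/
theorem displacement_minimum_torsion_and_axes
    {X : Type*} [MetricSpace X] [Nonempty X]
    (hgeo : IsGeodesicSpace X) (hpt : IsPtolemy X)
    (Γ : Subgroup (X ≃ᵢ X))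
    (hproper : ∀ x : X, ∃ r > 0, {γ : Γ | dist x ((γ : X ≃ᵢ X) x) < r}.Finite)
    (hcocompact : ∃ K : Set X, IsCompact K ∧ ∀ x : X, ∃ γ : Γ, ∃ k ∈ K, (γ : X ≃ᵢ X) k = x)
    (γ : Γ) :
    (∃ x₀ : X, dist x₀ ((γ : X ≃ᵢ X) x₀) = ⨅ x : X, dist x ((γ : X ≃ᵢ X) x)) ∧
    ((⨅ x : X, dist x ((γ : X ≃ᵢ X) x)) = 0 ↔ ∃ m : ℕ, 1 ≤ m ∧ γ ^ m = 1) ∧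
    (¬ (∃ m : ℕ, 1 ≤ m ∧ γ ^ m = 1) →
      ∀ x : X, LiesOnAxisOf (γ : X ≃ᵢ X) x ↔
        dist x ((γ : X ≃ᵢ X) x) = ⨅ y : X, dist y ((γ : X ≃ᵢ X) y)) := by
  obtain ⟨K, hK, hcov⟩ := hcocompact
  obtain ⟨x₀, hx₀⟩ := exists_min_displacement hgeo Γ hproper hK hcov γ
  have hinf : dist x₀ ((γ : X ≃ᵢ X) x₀) = ⨅ x : X, dist x ((γ : X ≃ᵢ X) x) :=
    le_antisymm (le_ciInf hx₀) (ciInf_le ⟨0, by rintro _ ⟨x, rfl⟩; exact dist_nonneg⟩ x₀)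
  have htor : (⨅ x : X, dist x ((γ : X ≃ᵢ X) x)) = 0 → ∃ m : ℕ, 1 ≤ m ∧ γ ^ m = 1 := by
    intro h0
    rw [← hinf, dist_eq_zero] at h0
    have hfix : ∀ n : ℕ, ((γ : X ≃ᵢ X) ^ n) x₀ = x₀ := by
      intro n
      induction n with
      | zero => simp
      | succ n ih => rw [pow_succ, IsometryEquiv.mul_apply, ← h0, ih]
    have hfin := finite_displacement hgeo Γ hproper hK hcov x₀ 0
    have hmem : ∀ n : ℕ, γ ^ n ∈ {g : Γ | dist x₀ ((g : X ≃ᵢ X) x₀) ≤ 0} := by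
      intro n
      simp [hfix n]
    have hfo : IsOfFinOrder γ := by
      by_contra hno
      exact Set.infinite_of_injective_forall_mem (injective_pow_iff_not_isOfFinOrder.2 hno) hmem
        hfin
    obtain ⟨m, hm, h⟩ := isOfFinOrder_iff_pow_eq_one.1 hfo
    exact ⟨m, hm, h⟩
  refine ⟨⟨x₀, hinf⟩, ⟨htor, ?_⟩, ?_⟩
  · rintro ⟨m, hm, h⟩
    rw [← hinf]
    by_contra hne
    have hax := exists_axis_of_min hgeo hpt (γ : X ≃ᵢ X) x₀ hx₀
      (lt_of_le_of_ne dist_nonneg (Ne.symm hne))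
    obtain ⟨L, hL, -, hn⟩ := axis_iterate hax
    have e : (γ : X ≃ᵢ X) ^ m = 1 := by exact_mod_cast congrArg Subtype.val h
    have := hn m
    rw [e, show (1 : X ≃ᵢ X) x₀ = x₀ from rfl, dist_self] at this
    have hm' : (0 : ℝ) < m := by exact_mod_cast hm
    have := mul_pos hm' hL
    linarith
  · intro hnt x
    constructor
    · intro hax
      rw [← hinf]
      exact le_antisymm (axis_le_displacement hax x₀) (hx₀ x)
    · intro hx
      rw [← hinf] at hx
      refine exists_axis_of_min hgeo hpt _ x (fun y => hx ▸ hx₀ y) ?_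
      refine lt_of_le_of_ne dist_nonneg fun h => hnt (htor ?_)
      rw [← hinf, ← hx, ← h]
end
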